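/- Let β₀, β₁, κ > 0 and for t > 0 define u_t := v_t + t² w_t, where v_t(x) = t³ V(x/t) + g(x), w_t = −((β₀+β₁)/κ) Δ v_t, V(y₁,y₂) = y₁ e^{−y₁} cos(y₂) and g(x₁,x₂) = sin(πx₁) sin(πx₂). Then u_t converges to g in H³ of the unit square as t → 0⁺: for every pair (a, b) of natural numbers with a + b ≤ 3, lim_{t → 0⁺} ∫_{(0,1)²} |∂₁^a ∂₂^b (u_t − g)(x)|² dx = 0. In particular the H³ norm of the transverse displacement u_t on (0,1)² remains bounded, and bounded away from zero, as t → 0⁺. -/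

import Mathlib

noncomputable section

open Real MeasureTheory Filter

/-- First partial derivative `∂₁` of a function on `ℝ²`. -/
def pd1 (f : ℝ × ℝ → ℝ) : ℝ × ℝ → ℝ := fun p => deriv (fun s => f (s, p.2)) p.1

/-- Second partial derivative `∂₂` of a function on `ℝ²`. -/
def pd2 (f : ℝ × ℝ → ℝ) : ℝ × ℝ → ℝ := fun p => deriv (fun s => f (p.1, s)) p.2

/-- Laplacian `Δ = ∂₁² + ∂₂²` on `ℝ²`. -/
def lap (f : ℝ × ℝ → ℝ) : ℝ × ℝ → ℝ := fun p => pd1 (pd1 f) p + pd2 (pd2 f) p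

/-- `V(y₁, y₂) = y₁ e^{−y₁} cos(y₂)`. -/
def V : ℝ × ℝ → ℝ := fun y => y.1 * Real.exp (-y.1) * Real.cos y.2

/-- `g(x₁, x₂) = sin(π x₁) sin(π x₂)`. -/
def g : ℝ × ℝ → ℝ := fun x => Real.sin (π * x.1) * Real.sin (π * x.2)

/-- `v_t(x) = t³ V(x/t) + g(x)`. -/
def vt (t : ℝ) : ℝ × ℝ → ℝ := fun x => t ^ 3 * V (x.1 / t, x.2 / t) + g x

/-- `w_t = −((β₀ + β₁)/κ) Δ v_t`. -/
def wt (β₀ β₁ κ t : ℝ) : ℝ × ℝ → ℝ := fun x => -((β₀ + β₁) / κ) * lap (vt t) x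

/-- Transverse displacement `u_t = v_t + t² w_t`. -/
def ut (β₀ β₁ κ t : ℝ) : ℝ × ℝ → ℝ := fun x => vt t x + t ^ 2 * wt β₀ β₁ κ t x

/-- The open unit square `(0,1)² ⊂ ℝ²`. -/
def usq : Set (ℝ × ℝ) := Set.Ioo (0 : ℝ) 1 ×ˢ Set.Ioo (0 : ℝ) 1

/-!
Put `c = (β₀ + β₁) / κ`. Two derivatives of `t³ V(x/t)` cost the factor `t⁻²`, which the `t²` in
front of `w_t` restores, so `u_t = t³ W(x/t) + (g - c t² Δg)(x)` with `W = V - c ΔV`. A derivative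
of order `k ≤ 3` of the layer term is `t^(3-k) (∂W)(x/t)`: it is bounded on the square because the
derivatives of `V` are bounded for `y₁ > 0`, and it tends to `0` wherever `x₁ > 0`, even for
`k = 3`, because they decay as `y₁ → ∞`; dominated convergence gives the limit in `L²`. The squared
`H³` norm of `u_t` therefore tends to that of `g`, which is positive.
-/

section

open scoped ContDiff Topology

variable {f F G : ℝ × ℝ → ℝ}

lemma pd1_eq_fderiv (hf : Differentiable ℝ f) : pd1 f = fun p => fderiv ℝ f p (1, 0) := by
  funext p
  exact ((hf p).hasFDerivAt.comp_hasDerivAt p.1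
    ((hasDerivAt_id p.1).prodMk (hasDerivAt_const p.1 p.2))).deriv

lemma pd2_eq_fderiv (hf : Differentiable ℝ f) : pd2 f = fun p => fderiv ℝ f p (0, 1) := by
  funext p
  exact ((hf p).hasFDerivAt.comp_hasDerivAt p.2
    ((hasDerivAt_const p.2 p.1).prodMk (hasDerivAt_id p.2))).deriv

lemma contDiff_pd1 (hf : ContDiff ℝ ∞ f) : ContDiff ℝ ∞ (pd1 f) := by
  rw [pd1_eq_fderiv (hf.differentiable (by simp))]
  exact (hf.fderiv_right (by simp)).clm_apply contDiff_const

lemma contDiff_pd2 (hf : ContDiff ℝ ∞ f) : ContDiff ℝ ∞ (pd2 f) := by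
  rw [pd2_eq_fderiv (hf.differentiable (by simp))]
  exact (hf.fderiv_right (by simp)).clm_apply contDiff_const

lemma contDiff_lap (hf : ContDiff ℝ ∞ f) : ContDiff ℝ ∞ (lap f) :=
  (contDiff_pd1 (contDiff_pd1 hf)).add (contDiff_pd2 (contDiff_pd2 hf))

lemma pd2_pd1_comm (hf : ContDiff ℝ ∞ f) : pd2 (pd1 f) = pd1 (pd2 f) := by
  have hf' : Differentiable ℝ f := hf.differentiable (by simp)
  have hdf : Differentiable ℝ (fderiv ℝ f) :=
    (hf.fderiv_right (m := ∞) (by simp)).differentiable (by simp)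
  rw [pd2_eq_fderiv ((contDiff_pd1 hf).differentiable (by simp)), pd1_eq_fderiv hf',
    pd1_eq_fderiv ((contDiff_pd2 hf).differentiable (by simp)), pd2_eq_fderiv hf']
  funext p
  have hsymm : IsSymmSndFDerivAt ℝ f p :=
    hf.contDiffAt.isSymmSndFDerivAt (by
      simpa only [minSmoothness_of_isRCLikeNormedField] using ENat.LEInfty.out)
  simpa [fderiv_clm_apply (hdf p) (differentiableAt_const _)] using hsymm (0, 1) (1, 0)

lemma pd1_add_const_mul (hF : Differentiable ℝ F) (hG : Differentiable ℝ G) (s : ℝ) :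
    pd1 (fun x => F x + s * G x) = fun x => pd1 F x + s * pd1 G x := by
  funext p
  have slice : Differentiable ℝ fun r : ℝ => (r, p.2) := by fun_prop
  exact (((hF.comp slice) p.1).hasDerivAt.add
    (((hG.comp slice) p.1).hasDerivAt.const_mul s)).deriv

lemma pd2_add_const_mul (hF : Differentiable ℝ F) (hG : Differentiable ℝ G) (s : ℝ) :
    pd2 (fun x => F x + s * G x) = fun x => pd2 F x + s * pd2 G x := by
  funext p
  have slice : Differentiable ℝ fun r : ℝ => (p.1, r) := by fun_prop
  exact (((hF.comp slice) p.2).hasDerivAt.add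
    (((hG.comp slice) p.2).hasDerivAt.const_mul s)).deriv

lemma pd1_comp_div (f : ℝ × ℝ → ℝ) (t : ℝ) :
    pd1 (fun x => f (x.1 / t, x.2 / t)) = fun x => t⁻¹ * pd1 f (x.1 / t, x.2 / t) := by
  funext p
  simpa [pd1, div_eq_inv_mul] using
    deriv_comp_mul_left t⁻¹ (fun s => f (s, p.2 / t)) p.1

lemma pd2_comp_div (f : ℝ × ℝ → ℝ) (t : ℝ) :
    pd2 (fun x => f (x.1 / t, x.2 / t)) = fun x => t⁻¹ * pd2 f (x.1 / t, x.2 / t) := by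
  funext p
  simpa [pd2, div_eq_inv_mul] using
    deriv_comp_mul_left t⁻¹ (fun s => f (p.1 / t, s)) p.2

/-- The mixed partial derivative `∂₁^a ∂₂^b f`. -/
def mixedPartial (a b : ℕ) (f : ℝ × ℝ → ℝ) : ℝ × ℝ → ℝ := pd1^[a] (pd2^[b] f)

lemma mixedPartial_zero_succ (b : ℕ) (f : ℝ × ℝ → ℝ) :
    mixedPartial 0 (b + 1) f = pd2 (mixedPartial 0 b f) :=
  Function.iterate_succ_apply' pd2 b f

lemma mixedPartial_succ (a b : ℕ) (f : ℝ × ℝ → ℝ) :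
    mixedPartial (a + 1) b f = pd1 (mixedPartial a b f) :=
  Function.iterate_succ_apply' pd1 a (pd2^[b] f)

lemma contDiff_mixedPartial (hf : ContDiff ℝ ∞ f) (a b : ℕ) :
    ContDiff ℝ ∞ (mixedPartial a b f) := by
  induction a with
  | zero =>
    induction b with
    | zero => exact hf
    | succ b ih => rw [mixedPartial_zero_succ]; exact contDiff_pd2 ih
  | succ a ih => rw [mixedPartial_succ]; exact contDiff_pd1 ih

lemma differentiable_mixedPartial (hf : ContDiff ℝ ∞ f) (a b : ℕ) :
    Differentiable ℝ (mixedPartial a b f) :=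
  (contDiff_mixedPartial hf a b).differentiable (by simp)

lemma mixedPartial_add_const_mul (hF : ContDiff ℝ ∞ F) (hG : ContDiff ℝ ∞ G) (a b : ℕ) (s : ℝ) :
    mixedPartial a b (fun x => F x + s * G x) =
      fun x => mixedPartial a b F x + s * mixedPartial a b G x := by
  induction a with
  | zero =>
    induction b with
    | zero => rfl
    | succ b ih =>
      simp only [mixedPartial_zero_succ, ih]
      exact pd2_add_const_mul (differentiable_mixedPartial hF 0 b)
        (differentiable_mixedPartial hG 0 b) s
  | succ a ih =>
    simp only [mixedPartial_succ, ih]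
    exact pd1_add_const_mul (differentiable_mixedPartial hF a b)
      (differentiable_mixedPartial hG a b) s

lemma mixedPartial_zero_fun (a b : ℕ) : mixedPartial a b (fun _ => 0) = fun _ => 0 := by
  simpa using mixedPartial_add_const_mul (F := fun _ => 0) (G := fun _ => 0)
    contDiff_const contDiff_const a b (-1)

lemma mixedPartial_pd1 (hf : ContDiff ℝ ∞ f) (a b : ℕ) :
    mixedPartial a b (pd1 f) = mixedPartial (a + 1) b f := by
  induction a with
  | zero =>
    induction b with
    | zero => rfl
    | succ b ih =>
      rw [mixedPartial_zero_succ, ih, mixedPartial_succ, mixedPartial_succ,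
        mixedPartial_zero_succ, pd2_pd1_comm (contDiff_mixedPartial hf 0 b)]
  | succ a ih => rw [mixedPartial_succ, ih, ← mixedPartial_succ]

lemma mixedPartial_pd2 (f : ℝ × ℝ → ℝ) (a b : ℕ) :
    mixedPartial a b (pd2 f) = mixedPartial a (b + 1) f :=
  rfl

lemma mixedPartial_lap (hf : ContDiff ℝ ∞ f) (a b : ℕ) :
    mixedPartial a b (lap f) =
      fun x => mixedPartial (a + 2) b f x + mixedPartial a (b + 2) f x := by
  have h := mixedPartial_add_const_mul (contDiff_pd1 (contDiff_pd1 hf))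
    (contDiff_pd2 (contDiff_pd2 hf)) a b 1
  simp only [one_mul, mixedPartial_pd1 (contDiff_pd1 hf), mixedPartial_pd1 hf,
    mixedPartial_pd2] at h
  exact h

/-- The two-scale function `x ↦ t^m F(x/t) + G(x)`; the paper's `v_t` is the case `m = 3`,
`F = V`, `G = g`. -/
def twoScale (m : ℕ) (F G : ℝ × ℝ → ℝ) (t : ℝ) : ℝ × ℝ → ℝ :=
  fun x => t ^ m * F (x.1 / t, x.2 / t) + G x

/-- The function `f - c t² Δ f`. The paper's `u_t` is `v_t` corrected in this way with
`c = (β₀ + β₁) / κ`; the sign is placed so that this holds definitionally. -/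
def laplaceCorrected (c t : ℝ) (f : ℝ × ℝ → ℝ) : ℝ × ℝ → ℝ :=
  fun x => f x + t ^ 2 * (-c * lap f x)

lemma contDiff_comp_div (hF : ContDiff ℝ ∞ F) (t : ℝ) :
    ContDiff ℝ ∞ fun x : ℝ × ℝ => F (x.1 / t, x.2 / t) :=
  hF.comp ((contDiff_fst.div_const t).prodMk (contDiff_snd.div_const t))

lemma pd1_twoScale (hF : ContDiff ℝ ∞ F) (hG : ContDiff ℝ ∞ G) (m : ℕ) {t : ℝ} (ht : t ≠ 0) :
    pd1 (twoScale (m + 1) F G t) = twoScale m (pd1 F) (pd1 G) t := by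
  have h := pd1_add_const_mul (hG.differentiable (by simp))
    ((contDiff_comp_div hF t).differentiable (by simp)) (t ^ (m + 1))
  simp only [pd1_comp_div] at h
  unfold twoScale
  simp only [add_comm _ (G _), h]
  funext x
  field_simp
  ring

lemma pd2_twoScale (hF : ContDiff ℝ ∞ F) (hG : ContDiff ℝ ∞ G) (m : ℕ) {t : ℝ} (ht : t ≠ 0) :
    pd2 (twoScale (m + 1) F G t) = twoScale m (pd2 F) (pd2 G) t := by
  have h := pd2_add_const_mul (hG.differentiable (by simp))
    ((contDiff_comp_div hF t).differentiable (by simp)) (t ^ (m + 1))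
  simp only [pd2_comp_div] at h
  unfold twoScale
  simp only [add_comm _ (G _), h]
  funext x
  field_simp
  ring

lemma mixedPartial_twoScale (hF : ContDiff ℝ ∞ F) (hG : ContDiff ℝ ∞ G) (a b k : ℕ) {t : ℝ}
    (ht : t ≠ 0) :
    mixedPartial a b (twoScale (k + (a + b)) F G t) =
      twoScale k (mixedPartial a b F) (mixedPartial a b G) t := by
  induction a generalizing k with
  | zero =>
    induction b generalizing k with
    | zero => rfl
    | succ b ih =>
      rw [show k + (0 + (b + 1)) = k + 1 + (0 + b) by ring]
      simp only [mixedPartial_zero_succ, ih]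
      exact pd2_twoScale (contDiff_mixedPartial hF 0 b) (contDiff_mixedPartial hG 0 b) k ht
  | succ a ih =>
    rw [show k + (a + 1 + b) = k + 1 + (a + b) by ring]
    simp only [mixedPartial_succ, ih]
    exact pd1_twoScale (contDiff_mixedPartial hF a b) (contDiff_mixedPartial hG a b) k ht

lemma lap_twoScale (hF : ContDiff ℝ ∞ F) (hG : ContDiff ℝ ∞ G) (m : ℕ) {t : ℝ} (ht : t ≠ 0) :
    lap (twoScale (m + 2) F G t) = twoScale m (lap F) (lap G) t := by
  funext x
  simp only [lap, pd1_twoScale hF hG (m + 1) ht, pd2_twoScale hF hG (m + 1) ht,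
    pd1_twoScale (contDiff_pd1 hF) (contDiff_pd1 hG) m ht,
    pd2_twoScale (contDiff_pd2 hF) (contDiff_pd2 hG) m ht, twoScale]
  ring

lemma laplaceCorrected_twoScale (hF : ContDiff ℝ ∞ F) (hG : ContDiff ℝ ∞ G) (c : ℝ) (m : ℕ)
    {t : ℝ} (ht : t ≠ 0) :
    laplaceCorrected c t (twoScale (m + 2) F G t) =
      twoScale (m + 2) (laplaceCorrected c 1 F) (laplaceCorrected c t G) t := by
  funext x
  simp only [laplaceCorrected, lap_twoScale hF hG m ht, twoScale]
  ring

lemma contDiff_laplaceCorrected (hf : ContDiff ℝ ∞ f) (c t : ℝ) :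
    ContDiff ℝ ∞ (laplaceCorrected c t f) :=
  hf.add (contDiff_const.mul (contDiff_const.mul (contDiff_lap hf)))

lemma mixedPartial_laplaceCorrected (hf : ContDiff ℝ ∞ f) (a b : ℕ) (c t : ℝ) :
    mixedPartial a b (laplaceCorrected c t f) = fun x =>
      mixedPartial a b f x +
        -(c * t ^ 2) * (mixedPartial (a + 2) b f x + mixedPartial a (b + 2) f x) := by
  have hform : laplaceCorrected c t f = fun x => f x + -(c * t ^ 2) * lap f x := by
    funext x
    simp only [laplaceCorrected]
    ring
  rw [hform, mixedPartial_add_const_mul hf (contDiff_lap hf), mixedPartial_lap hf]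

/-- Boundary-layer profiles at the edge `y₁ = 0`: smooth functions all of whose mixed partial
derivatives are bounded on the half-plane `y₁ > 0` and tend to `0` as `y₁ → ∞`, uniformly in
`y₂`. -/
structure IsBoundaryLayer (F : ℝ × ℝ → ℝ) : Prop where
  contDiff : ContDiff ℝ ∞ F
  bounded : ∀ a b, ∃ M, ∀ y : ℝ × ℝ, 0 < y.1 → |mixedPartial a b F y| ≤ M
  decay : ∀ a b, Tendsto (mixedPartial a b F) (comap Prod.fst atTop) (𝓝 0)

lemma IsBoundaryLayer.laplaceCorrected (hF : IsBoundaryLayer F) (c t : ℝ) :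
    IsBoundaryLayer (laplaceCorrected c t F) where
  contDiff := contDiff_laplaceCorrected hF.contDiff c t
  bounded a b := by
    obtain ⟨M₀, hM₀⟩ := hF.bounded a b
    obtain ⟨M₁, hM₁⟩ := hF.bounded (a + 2) b
    obtain ⟨M₂, hM₂⟩ := hF.bounded a (b + 2)
    refine ⟨M₀ + |-(c * t ^ 2)| * (M₁ + M₂), fun y hy => ?_⟩
    rw [mixedPartial_laplaceCorrected hF.contDiff]
    refine (abs_add_le _ _).trans (add_le_add (hM₀ y hy) ?_)
    rw [abs_mul]
    gcongr
    exact (abs_add_le _ _).trans (add_le_add (hM₁ y hy) (hM₂ y hy))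
  decay a b := by
    rw [mixedPartial_laplaceCorrected hF.contDiff]
    simpa using (hF.decay a b).add
      (((hF.decay (a + 2) b).add (hF.decay a (b + 2))).const_mul (-(c * t ^ 2)))

section Limits

variable {Ω : Set (ℝ × ℝ)}

lemma tendsto_comp_div_nhdsGT_zero (hF : Tendsto F (comap Prod.fst atTop) (𝓝 0)) {x : ℝ × ℝ}
    (hx : 0 < x.1) : Tendsto (fun t : ℝ => F (x.1 / t, x.2 / t)) (𝓝[>] 0) (𝓝 0) := by
  have hdiv : Tendsto (fun t : ℝ => x.1 / t) (𝓝[>] 0) atTop := by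
    simpa only [div_eq_mul_inv] using tendsto_inv_nhdsGT_zero.const_mul_atTop hx
  exact hF.comp (tendsto_comap_iff.2 hdiv)

lemma integrableOn_of_continuous_of_isBounded (hf : Continuous f) (hΩb : Bornology.IsBounded Ω) :
    IntegrableOn f Ω :=
  (hf.continuousOn.integrableOn_compact hΩb.isCompact_closure).mono_set subset_closure

lemma tendsto_setIntegral_twoScale_sq {M : ℝ} {H : ℝ × ℝ → ℝ} (hΩ : MeasurableSet Ω)
    (hΩb : Bornology.IsBounded Ω) (hΩpos : ∀ x ∈ Ω, 0 < x.1) (hF : Continuous F)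
    (hFM : ∀ y : ℝ × ℝ, 0 < y.1 → |F y| ≤ M) (hF0 : Tendsto F (comap Prod.fst atTop) (𝓝 0))
    (hG : Continuous G) (hH : Continuous H) (k : ℕ) :
    Tendsto (fun t : ℝ => ∫ x in Ω, twoScale k F (fun x => G x + t ^ 2 * H x) t x ^ 2)
      (𝓝[>] 0) (𝓝 (∫ x in Ω, G x ^ 2)) := by
  have hunit : ∀ᶠ t : ℝ in 𝓝[>] 0, t ∈ Set.Ioo (0 : ℝ) 1 := Ioo_mem_nhdsGT one_pos
  have hpow (j : ℕ) : ∀ᶠ t : ℝ in 𝓝[>] 0, |t ^ j| ≤ 1 := by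
    filter_upwards [hunit] with t ht
    rw [abs_of_pos (pow_pos ht.1 j)]
    exact pow_le_one₀ ht.1.le ht.2.le
  refine tendsto_integral_filter_of_dominated_convergence
    (fun x => (M + (|G x| + |H x|)) ^ 2) ?measurable ?bound ?integrable ?limit
  case measurable =>
    refine .of_forall fun t => Continuous.aestronglyMeasurable ?_
    unfold twoScale
    fun_prop
  case bound =>
    filter_upwards [hunit, hpow k, hpow 2] with t ht hk h2
    refine ae_restrict_of_forall_mem hΩ fun x hx => ?_
    have hlayer : |t ^ k * F (x.1 / t, x.2 / t)| ≤ M := by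
      rw [abs_mul]
      exact (mul_le_of_le_one_left (abs_nonneg _) hk).trans (hFM _ (div_pos (hΩpos x hx) ht.1))
    have houter : |G x + t ^ 2 * H x| ≤ |G x| + |H x| := by
      refine (abs_add_le _ _).trans (add_le_add_right ?_ _)
      rw [abs_mul]
      exact mul_le_of_le_one_left (abs_nonneg _) h2
    rw [norm_pow, Real.norm_eq_abs]
    gcongr
    exact (abs_add_le _ _).trans (add_le_add hlayer houter)
  case integrable => exact integrableOn_of_continuous_of_isBounded (by fun_prop) hΩb
  case limit =>
    refine ae_restrict_of_forall_mem hΩ fun x hx => Tendsto.pow ?_ 2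
    have hlayer : Tendsto (fun t : ℝ => t ^ k * F (x.1 / t, x.2 / t)) (𝓝[>] 0) (𝓝 0) :=
      bdd_le_mul_tendsto_zero' 1 (hpow k) (tendsto_comp_div_nhdsGT_zero hF0 (hΩpos x hx))
    have houter : Tendsto (fun t : ℝ => G x + t ^ 2 * H x) (𝓝[>] 0) (𝓝 (G x)) := by
      have hcont : Continuous fun t : ℝ => G x + t ^ 2 * H x := by fun_prop
      simpa using (hcont.tendsto 0).mono_left nhdsWithin_le_nhds
    simpa only [zero_add, twoScale] using hlayer.add houter

lemma tendsto_setIntegral_mixedPartial_twoScale_sq {H : ℝ × ℝ → ℝ} {a b m : ℕ}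
    (hΩ : MeasurableSet Ω) (hΩb : Bornology.IsBounded Ω) (hΩpos : ∀ x ∈ Ω, 0 < x.1)
    (hF : IsBoundaryLayer F) (hG : ContDiff ℝ ∞ G) (hH : ContDiff ℝ ∞ H) (hab : a + b ≤ m) :
    Tendsto
      (fun t : ℝ =>
        ∫ x in Ω, mixedPartial a b (twoScale m F (fun x => G x + t ^ 2 * H x) t) x ^ 2)
      (𝓝[>] 0) (𝓝 (∫ x in Ω, mixedPartial a b G x ^ 2)) := by
  obtain ⟨k, rfl⟩ := Nat.exists_eq_add_of_le' hab
  obtain ⟨M, hM⟩ := hF.bounded a b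
  refine (tendsto_setIntegral_twoScale_sq hΩ hΩb hΩpos
    (contDiff_mixedPartial hF.contDiff a b).continuous hM (hF.decay a b)
    (contDiff_mixedPartial hG a b).continuous (contDiff_mixedPartial hH a b).continuous k).congr' ?_
  filter_upwards [self_mem_nhdsWithin] with t ht
  have houter : ContDiff ℝ ∞ fun x => G x + t ^ 2 * H x := hG.add (contDiff_const.mul hH)
  rw [mixedPartial_twoScale hF.contDiff houter a b k (ne_of_gt ht),
    mixedPartial_add_const_mul hG hH]

lemma tendsto_setIntegral_mixedPartial_laplaceCorrected_sub_sq {a b n : ℕ}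
    (hΩ : MeasurableSet Ω) (hΩb : Bornology.IsBounded Ω) (hΩpos : ∀ x ∈ Ω, 0 < x.1)
    (hF : IsBoundaryLayer F) (hG : ContDiff ℝ ∞ G) (c : ℝ) (hab : a + b ≤ n + 2) :
    Tendsto
      (fun t : ℝ => ∫ x in Ω, mixedPartial a b
        (fun y => laplaceCorrected c t (twoScale (n + 2) F G t) y - G y) x ^ 2)
      (𝓝[>] 0) (𝓝 0) := by
  have h := tendsto_setIntegral_mixedPartial_twoScale_sq hΩ hΩb hΩpos (hF.laplaceCorrected c 1)
    (contDiff_const (c := 0)) ((contDiff_const (c := -c)).mul (contDiff_lap hG)) hab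
  simp only [mixedPartial_zero_fun, ne_eq, OfNat.ofNat_ne_zero, not_false_eq_true, zero_pow,
    integral_zero] at h
  refine h.congr' ?_
  filter_upwards [self_mem_nhdsWithin] with t ht
  rw [laplaceCorrected_twoScale hF.contDiff hG c n (ne_of_gt ht)]
  congr! 5 with x y
  simp only [twoScale, laplaceCorrected]
  ring

lemma tendsto_setIntegral_mixedPartial_laplaceCorrected_sq {a b n : ℕ}
    (hΩ : MeasurableSet Ω) (hΩb : Bornology.IsBounded Ω) (hΩpos : ∀ x ∈ Ω, 0 < x.1)
    (hF : IsBoundaryLayer F) (hG : ContDiff ℝ ∞ G) (c : ℝ) (hab : a + b ≤ n + 2) :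
    Tendsto
      (fun t : ℝ => ∫ x in Ω, mixedPartial a b
        (laplaceCorrected c t (twoScale (n + 2) F G t)) x ^ 2)
      (𝓝[>] 0) (𝓝 (∫ x in Ω, mixedPartial a b G x ^ 2)) := by
  refine (tendsto_setIntegral_mixedPartial_twoScale_sq hΩ hΩb hΩpos (hF.laplaceCorrected c 1) hG
    ((contDiff_const (c := -c)).mul (contDiff_lap hG)) hab).congr' ?_
  filter_upwards [self_mem_nhdsWithin] with t ht
  rw [laplaceCorrected_twoScale hF.contDiff hG c n (ne_of_gt ht)]
  rfl

lemma setIntegral_sq_pos (hΩ : IsOpen Ω) (hΩb : Bornology.IsBounded Ω) (hG : Continuous G)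
    (hne : ∃ x ∈ Ω, G x ≠ 0) : 0 < ∫ x in Ω, G x ^ 2 := by
  rw [setIntegral_pos_iff_support_of_nonneg_ae (.of_forall fun x => sq_nonneg (G x))
    (integrableOn_of_continuous_of_isBounded (hG.pow 2) hΩb)]
  obtain ⟨x, hx, hGx⟩ := hne
  exact ((hG.pow 2).isOpen_support.inter hΩ).measure_pos volume ⟨x, pow_ne_zero 2 hGx, hx⟩

/-- The squared norm of `f` in `H^m(Ω)`, as the sum of the squared `L²` norms of its mixed partial
derivatives `∂₁^a ∂₂^b f` with `a + b ≤ m`; meaningful for `f` smooth near the closure of `Ω`. -/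
def sobolevNormSq (Ω : Set (ℝ × ℝ)) (m : ℕ) (f : ℝ × ℝ → ℝ) : ℝ :=
  ∑ a ∈ Finset.range (m + 1), ∑ b ∈ Finset.range (m + 1 - a), ∫ x in Ω, mixedPartial a b f x ^ 2

lemma sobolevNormSq_pos (hΩ : IsOpen Ω) (hΩb : Bornology.IsBounded Ω) (hG : Continuous G)
    (hne : ∃ x ∈ Ω, G x ≠ 0) (m : ℕ) : 0 < sobolevNormSq Ω m G := by
  have hnonneg (a b : ℕ) : 0 ≤ ∫ x in Ω, mixedPartial a b G x ^ 2 :=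
    integral_nonneg fun x => sq_nonneg _
  refine Finset.sum_pos' (fun a _ => Finset.sum_nonneg fun b _ => hnonneg a b) ⟨0, by simp, ?_⟩
  exact Finset.sum_pos' (fun b _ => hnonneg 0 b) ⟨0, by simp, setIntegral_sq_pos hΩ hΩb hG hne⟩

lemma tendsto_sobolevNormSq_laplaceCorrected (hΩ : MeasurableSet Ω)
    (hΩb : Bornology.IsBounded Ω) (hΩpos : ∀ x ∈ Ω, 0 < x.1) (hF : IsBoundaryLayer F)
    (hG : ContDiff ℝ ∞ G) (n : ℕ) (c : ℝ) :
    Tendsto (fun t : ℝ => sobolevNormSq Ω (n + 2) (laplaceCorrected c t (twoScale (n + 2) F G t)))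
      (𝓝[>] 0) (𝓝 (sobolevNormSq Ω (n + 2) G)) := by
  refine tendsto_finsetSum _ fun a ha => tendsto_finsetSum _ fun b hb => ?_
  rw [Finset.mem_range] at ha hb
  exact tendsto_setIntegral_mixedPartial_laplaceCorrected_sq hΩ hΩb hΩpos hF hG c (by omega)

end Limits

lemma exists_bounds_of_tendsto_pos {N : ℝ → ℝ} {L : ℝ} (hN : Tendsto N (𝓝[>] 0) (𝓝 L))
    (hL : 0 < L) :
    ∃ c C t₀ : ℝ, 0 < c ∧ 0 < t₀ ∧ ∀ t : ℝ, 0 < t → t < t₀ → c ≤ N t ∧ N t ≤ C := by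
  have hmem : ∀ᶠ t in 𝓝[>] 0, N t ∈ Set.Icc (L / 2) (L + 1) :=
    hN.eventually (Icc_mem_nhds (half_lt_self hL) (lt_add_one L))
  obtain ⟨t₀, ht₀, hsub⟩ := mem_nhdsGT_iff_exists_Ioo_subset.1 hmem
  exact ⟨L / 2, L + 1, t₀, half_pos hL, ht₀, fun t h0 h1 => hsub ⟨h0, h1⟩⟩

/-- The family `(A + B y₁) e^{-y₁} cos (y₂ + φ)`, closed under both partial derivatives; it
contains `V`. -/
def expLayer (A B φ : ℝ) : ℝ × ℝ → ℝ :=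
  fun y => (A + B * y.1) * Real.exp (-y.1) * Real.cos (y.2 + φ)

lemma V_eq_expLayer : V = expLayer 0 1 0 := by
  funext y
  simp [V, expLayer]

lemma pd1_expLayer (A B φ : ℝ) : pd1 (expLayer A B φ) = expLayer (B - A) (-B) φ := by
  funext p
  have hpoly : HasDerivAt (fun s : ℝ => A + B * s) (B * 1) p.1 :=
    ((hasDerivAt_id p.1).const_mul B).const_add A
  have hexp : HasDerivAt (fun s : ℝ => Real.exp (-s)) (Real.exp (-p.1) * -1) p.1 :=
    (hasDerivAt_id p.1).neg.exp
  refine ((hpoly.mul hexp).mul_const (Real.cos (p.2 + φ))).deriv.trans ?_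
  simp only [expLayer]
  ring

lemma pd2_expLayer (A B φ : ℝ) : pd2 (expLayer A B φ) = expLayer A B (φ + π / 2) := by
  funext p
  have hcos : HasDerivAt (fun s : ℝ => Real.cos (s + φ)) (-Real.sin (p.2 + φ) * 1) p.2 :=
    ((hasDerivAt_id p.2).add_const φ).cos
  refine (hcos.const_mul ((A + B * p.1) * Real.exp (-p.1))).deriv.trans ?_
  simp only [expLayer, ← add_assoc, Real.cos_add_pi_div_two, mul_one]

lemma exists_mixedPartial_expLayer (A B φ : ℝ) (a b : ℕ) :
    ∃ A' B' φ', mixedPartial a b (expLayer A B φ) = expLayer A' B' φ' := by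
  induction a with
  | zero =>
    induction b with
    | zero => exact ⟨A, B, φ, rfl⟩
    | succ b ih =>
      obtain ⟨A', B', φ', h⟩ := ih
      exact ⟨A', B', φ' + π / 2, by rw [mixedPartial_zero_succ, h, pd2_expLayer]⟩
  | succ a ih =>
    obtain ⟨A', B', φ', h⟩ := ih
    exact ⟨B' - A', -B', φ', by rw [mixedPartial_succ, h, pd1_expLayer]⟩

lemma abs_expLayer_le (A B φ : ℝ) (y : ℝ × ℝ) :
    |expLayer A B φ y| ≤ |(A + B * y.1) * Real.exp (-y.1)| := by
  rw [expLayer, abs_mul]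
  exact mul_le_of_le_one_right (abs_nonneg _) (Real.abs_cos_le_one _)

lemma abs_linear_mul_exp_neg_le (A B : ℝ) {y : ℝ} (hy : 0 ≤ y) :
    |(A + B * y) * Real.exp (-y)| ≤ |A| + |B| := by
  have hexp : Real.exp (-y) ≤ 1 := Real.exp_le_one_iff.2 (neg_nonpos.2 hy)
  have hmul : y * Real.exp (-y) ≤ 1 := by
    rw [Real.exp_neg, ← div_eq_mul_inv, div_le_one (Real.exp_pos y)]
    linarith [Real.add_one_le_exp y]
  calc |(A + B * y) * Real.exp (-y)|
      = |A * Real.exp (-y) + B * (y * Real.exp (-y))| := by congr 1; ring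
    _ ≤ |A| * Real.exp (-y) + |B| * (y * Real.exp (-y)) := by
        refine (abs_add_le _ _).trans_eq ?_
        rw [abs_mul, abs_mul, abs_of_pos (Real.exp_pos _),
          abs_of_nonneg (mul_nonneg hy (Real.exp_pos _).le)]
    _ ≤ |A| * 1 + |B| * 1 := by gcongr
    _ = |A| + |B| := by ring

lemma tendsto_linear_mul_exp_neg_atTop (A B : ℝ) :
    Tendsto (fun y : ℝ => (A + B * y) * Real.exp (-y)) atTop (𝓝 0) := by
  have h := ((Real.tendsto_pow_mul_exp_neg_atTop_nhds_zero 0).const_mul A).add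
    ((Real.tendsto_pow_mul_exp_neg_atTop_nhds_zero 1).const_mul B)
  simp only [mul_zero, add_zero] at h
  exact h.congr fun y => by ring

lemma isBoundaryLayer_expLayer (A B φ : ℝ) : IsBoundaryLayer (expLayer A B φ) where
  contDiff := by
    unfold expLayer
    fun_prop
  bounded a b := by
    obtain ⟨A', B', φ', h⟩ := exists_mixedPartial_expLayer A B φ a b
    rw [h]
    exact ⟨|A'| + |B'|, fun y hy =>
      (abs_expLayer_le A' B' φ' y).trans (abs_linear_mul_exp_neg_le A' B' hy.le)⟩
  decay a b := by
    obtain ⟨A', B', φ', h⟩ := exists_mixedPartial_expLayer A B φ a b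
    rw [h]
    refine squeeze_zero_norm (abs_expLayer_le A' B' φ') ?_
    simpa using ((tendsto_linear_mul_exp_neg_atTop A' B').comp tendsto_comap).abs

lemma isBoundaryLayer_V : IsBoundaryLayer V :=
  V_eq_expLayer ▸ isBoundaryLayer_expLayer 0 1 0

lemma contDiff_g : ContDiff ℝ ∞ g := by
  unfold g
  fun_prop

lemma isOpen_usq : IsOpen usq := isOpen_Ioo.prod isOpen_Ioo

lemma isBounded_usq : Bornology.IsBounded usq :=
  (Metric.isBounded_Ioo 0 1).prod (Metric.isBounded_Ioo 0 1)

lemma exists_mem_usq_g_ne_zero : ∃ x ∈ usq, g x ≠ 0 := by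
  refine ⟨(1 / 2, 1 / 2), ?_, ?_⟩
  · norm_num [usq]
  · simp [g, ← div_eq_mul_inv]

theorem stmt_11_general {F G : ℝ × ℝ → ℝ} {Ω : Set (ℝ × ℝ)} (hΩ : IsOpen Ω)
    (hΩb : Bornology.IsBounded Ω) (hΩpos : ∀ x ∈ Ω, 0 < x.1) (hF : IsBoundaryLayer F)
    (hG : ContDiff ℝ ∞ G) (hne : ∃ x ∈ Ω, G x ≠ 0) (n : ℕ) (c : ℝ) :
    (∀ a b : ℕ, a + b ≤ n + 2 →
      Tendsto
        (fun t : ℝ => ∫ x in Ω, mixedPartial a b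
          (fun y => laplaceCorrected c t (twoScale (n + 2) F G t) y - G y) x ^ 2)
        (𝓝[>] 0) (𝓝 0)) ∧
    ∃ c₀ C t₀ : ℝ, 0 < c₀ ∧ 0 < t₀ ∧
      ∀ t : ℝ, 0 < t → t < t₀ →
        c₀ ≤ sobolevNormSq Ω (n + 2) (laplaceCorrected c t (twoScale (n + 2) F G t)) ∧
        sobolevNormSq Ω (n + 2) (laplaceCorrected c t (twoScale (n + 2) F G t)) ≤ C :=
  ⟨fun _ _ hab => tendsto_setIntegral_mixedPartial_laplaceCorrected_sub_sq
    hΩ.measurableSet hΩb hΩpos hF hG c hab,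
  exists_bounds_of_tendsto_pos
    (tendsto_sobolevNormSq_laplaceCorrected hΩ.measurableSet hΩb hΩpos hF hG n c)
    (sobolevNormSq_pos hΩ hΩb hG.continuous hne (n + 2))⟩

end

/-- `u_t → g` in `H³((0,1)²)` as `t → 0⁺` (all mixed derivatives of
order ≤ 3 of `u_t − g` tend to `0` in `L²`); in particular the `H³` norm of `u_t`
remains bounded, and bounded away from zero, as `t → 0⁺`. -/
theorem stmt_11 (β₀ β₁ κ : ℝ) (hβ₀ : 0 < β₀) (hβ₁ : 0 < β₁) (hκ : 0 < κ) :
    (∀ a b : ℕ, a + b ≤ 3 →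
      Tendsto
        (fun t : ℝ =>
          ∫ x in usq, (pd1^[a] (pd2^[b] (fun y => ut β₀ β₁ κ t y - g y)) x) ^ 2)
        (nhdsWithin 0 (Set.Ioi 0)) (nhds 0)) ∧
    ∃ c C t₀ : ℝ, 0 < c ∧ 0 < t₀ ∧
      ∀ t : ℝ, 0 < t → t < t₀ →
        c ≤ (∑ a ∈ Finset.range 4, ∑ b ∈ Finset.range (4 - a),
              ∫ x in usq, (pd1^[a] (pd2^[b] (ut β₀ β₁ κ t)) x) ^ 2) ∧
        (∑ a ∈ Finset.range 4, ∑ b ∈ Finset.range (4 - a),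
              ∫ x in usq, (pd1^[a] (pd2^[b] (ut β₀ β₁ κ t)) x) ^ 2) ≤ C :=
  stmt_11_general isOpen_usq isBounded_usq (fun _ hx => hx.1.1) isBoundaryLayer_V contDiff_g
    exists_mem_usq_g_ne_zero 1 ((β₀ + β₁) / κ)

end
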